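/- Let α be an irrational real number, let p be an integer and q a positive integer with p and q relatively prime, and let r be a nonzero integer and s a positive integer with r and s relatively prime. Set β := p/q + (r/s)α. Then lim_{n→∞} (1/n) ∑_{j=1}^n ({jβ} − {jα})² = 1/6 − gcd(s,q)² / (6 s r q²). -/

import Mathlib

open Filter Finset

open MeasureTheory in
lemma weyl_fourier (φ : ℝ) (hφ : Irrational φ) (m : ℤ) :
    Tendsto (fun N : ℕ => (1 / (N : ℂ)) * ∑ k ∈ Finset.range N,
      fourier m (((k : ℝ) * φ : ℝ) : AddCircle (1 : ℝ))) atTop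
      (nhds (∫ x, fourier m x ∂(AddCircle.haarAddCircle (T := (1 : ℝ))))) := by
  have hpow : ∀ k : ℕ, fourier m (((k : ℝ) * φ : ℝ) : AddCircle (1 : ℝ)) =
      (fourier m ((φ : ℝ) : AddCircle (1 : ℝ)) : ℂ) ^ k := by
    intro k
    rw [fourier_coe_apply, fourier_coe_apply, ← Complex.exp_nat_mul]
    congr 1
    push_cast
    ring
  simp_rw [hpow]
  by_cases hm : m = 0
  · subst hm
    simp only [fourier_zero, one_pow, sum_const, card_range, nsmul_eq_mul, mul_one,
      integral_const, probReal_univ, one_smul]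
    apply tendsto_const_nhds.congr'
    filter_upwards [eventually_gt_atTop 0] with N hN
    have : (N : ℂ) ≠ 0 := by exact_mod_cast hN.ne'
    field_simp
  · have hint : ∫ x, fourier m x ∂(AddCircle.haarAddCircle (T := (1 : ℝ))) = 0 :=
      integral_eq_zero_of_add_right_eq_neg (μ := AddCircle.haarAddCircle)
        (fourier_add_half_inv_index hm one_pos)
    rw [hint]
    set z : ℂ := fourier m ((φ : ℝ) : AddCircle (1 : ℝ)) with hz
    have hz1 : z ≠ 1 := by
      intro h
      rw [hz, fourier_coe_apply, Complex.exp_eq_one_iff] at h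
      obtain ⟨n, hn⟩ := h
      have h2 : (2 * (Real.pi : ℂ) * Complex.I) ≠ 0 := by simp
      have h3 : ((m : ℂ) * φ) = n := by
        apply mul_left_cancel₀ h2
        have : (((1:ℝ)) : ℂ) = 1 := by simp
        rw [this, div_one] at hn
        linear_combination hn
      have h4 : ((m : ℝ) * φ) = n := by exact_mod_cast h3
      exact (hφ.intCast_mul hm).ne_int n h4
    have hzn : ‖z‖ = 1 := by
      rw [hz, fourier_apply]; exact Circle.norm_coe _
    have hz1' : z - 1 ≠ 0 := sub_ne_zero.2 hz1
    have hb : ∀ N : ℕ, ‖(1 / (N : ℂ)) * ∑ k ∈ Finset.range N, z ^ k‖ ≤ (2 / ‖z - 1‖) / N := by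
      intro N
      rw [geom_sum_eq hz1, norm_mul, norm_div, norm_div]
      have : ‖z ^ N - 1‖ ≤ 2 := by
        refine (norm_sub_le _ _).trans ?_
        rw [norm_pow, hzn]; norm_num
      simp only [norm_one, Complex.norm_natCast]
      rw [div_mul_eq_mul_div, one_mul]
      gcongr
    exact squeeze_zero_norm hb (tendsto_const_div_atTop_nhds_zero_nat _)

open MeasureTheory in
lemma weyl_circle (φ : ℝ) (hφ : Irrational φ) (f : C(AddCircle (1 : ℝ), ℂ)) :
    Tendsto (fun N : ℕ => (1 / (N : ℂ)) * ∑ k ∈ Finset.range N,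
      f (((k : ℝ) * φ : ℝ) : AddCircle (1 : ℝ))) atTop
      (nhds (∫ x, f x ∂(AddCircle.haarAddCircle (T := (1 : ℝ))))) := by
  have hspan : ∀ g ∈ Submodule.span ℂ (Set.range (@fourier (1 : ℝ))),
      Tendsto (fun N : ℕ => (1 / (N : ℂ)) * ∑ k ∈ Finset.range N,
      g (((k : ℝ) * φ : ℝ) : AddCircle (1 : ℝ))) atTop
      (nhds (∫ x, g x ∂(AddCircle.haarAddCircle (T := (1 : ℝ))))) := by
    intro g hg
    induction hg using Submodule.span_induction with
    | mem x h =>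
      obtain ⟨m, rfl⟩ := h
      exact weyl_fourier φ hφ m
    | zero => simp
    | add x y _ _ hx hy =>
      have := hx.add hy
      simp only [ContinuousMap.add_apply]
      rw [integral_add]
      · refine this.congr fun N => ?_
        rw [sum_add_distrib, mul_add]
      · exact x.continuous.integrable_of_hasCompactSupport (HasCompactSupport.of_compactSpace _)
      · exact y.continuous.integrable_of_hasCompactSupport (HasCompactSupport.of_compactSpace _)
    | smul a x _ hx =>
      have := hx.const_mul a
      simp only [ContinuousMap.smul_apply, smul_eq_mul]
      rw [integral_const_mul]
      refine this.congr fun N => ?_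
      rw [← mul_sum]; ring
  have hf : f ∈ (Submodule.span ℂ (Set.range (@fourier (1 : ℝ)))).topologicalClosure := by
    rw [span_fourier_closure_eq_top]; trivial
  rw [Metric.tendsto_atTop]
  intro ε hε
  have hf' : f ∈ closure ((Submodule.span ℂ (Set.range (@fourier (1 : ℝ)))) : Set _) := hf
  obtain ⟨g, hg, hfg⟩ := Metric.mem_closure_iff.1 hf' (ε / 3) (by positivity)
  obtain ⟨N₀, hN₀⟩ := Metric.tendsto_atTop.1 (hspan g hg) (ε / 3) (by positivity)
  refine ⟨N₀, fun N hN => ?_⟩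
  have h1 := hN₀ N hN
  have hpt : ∀ x, ‖f x - g x‖ ≤ ε / 3 := fun x => by
    rw [← dist_eq_norm]; exact (ContinuousMap.dist_apply_le_dist x).trans hfg.le
  have h2 : dist ((1 / (N : ℂ)) * ∑ k ∈ Finset.range N,
      f (((k : ℝ) * φ : ℝ) : AddCircle (1 : ℝ))) ((1 / (N : ℂ)) * ∑ k ∈ Finset.range N,
      g (((k : ℝ) * φ : ℝ) : AddCircle (1 : ℝ))) ≤ ε / 3 := by
    rw [dist_eq_norm, ← mul_sub, ← sum_sub_distrib, norm_mul]
    have : ‖∑ k ∈ Finset.range N, (f (((k : ℝ) * φ : ℝ) : AddCircle (1 : ℝ)) -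
        g (((k : ℝ) * φ : ℝ) : AddCircle (1 : ℝ)))‖ ≤ N * (ε / 3) := by
      refine (norm_sum_le_of_le _ (fun k _ => hpt _)).trans ?_
      simp
    simp only [norm_div, norm_one, Complex.norm_natCast]
    rcases Nat.eq_zero_or_pos N with h0 | h0
    · subst h0; simp; positivity
    · have h0' : (0 : ℝ) < N := by exact_mod_cast h0
      rw [div_mul_eq_mul_div, one_mul, div_le_iff₀ h0']
      linarith
  have h3 : dist (∫ x, g x ∂(AddCircle.haarAddCircle (T := (1 : ℝ))))
      (∫ x, f x ∂(AddCircle.haarAddCircle (T := (1 : ℝ)))) ≤ ε / 3 := by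
    rw [dist_comm, dist_eq_norm, ← integral_sub]
    · have := norm_integral_le_of_norm_le_const (μ := (AddCircle.haarAddCircle (T := (1 : ℝ))))
        (f := fun x => f x - g x) (C := ε / 3) (Eventually.of_forall hpt)
      simpa using this
    · exact f.continuous.integrable_of_hasCompactSupport (HasCompactSupport.of_compactSpace _)
    · exact g.continuous.integrable_of_hasCompactSupport (HasCompactSupport.of_compactSpace _)
  have h4 := (dist_triangle4 _ _ _ _).trans_lt
    (add_lt_add_of_lt_of_le (add_lt_add_of_le_of_lt h2 h1) h3)
  linarith

lemma weyl_real (φ : ℝ) (hφ : Irrational φ) (H : ℝ → ℝ) (hc : Continuous H)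
    (hp : Function.Periodic H 1) :
    Tendsto (fun N : ℕ => (1 / (N : ℝ)) * ∑ k ∈ Finset.range N, H ((k : ℝ) * φ)) atTop
      (nhds (∫ x in (0 : ℝ)..1, H x)) := by
  have hp' : Function.Periodic (fun x => (H x : ℂ)) 1 := fun x => by simp [hp x]
  let f : C(AddCircle (1 : ℝ), ℂ) := ⟨hp'.lift, by
    apply continuous_coinduced_dom.mpr
    exact Complex.continuous_ofReal.comp hc⟩
  have h := weyl_circle φ hφ f
  have hf : ∀ x : ℝ, f (x : AddCircle (1 : ℝ)) = (H x : ℂ) := fun x => hp'.lift_coe x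
  have hi : ∫ x, f x ∂(AddCircle.haarAddCircle (T := (1 : ℝ))) =
      ((∫ x in (0 : ℝ)..1, H x : ℝ) : ℂ) := by
    rw [AddCircle.integral_haarAddCircle, ← AddCircle.intervalIntegral_preimage 1 0]
    simp only [hf, zero_add, inv_one, one_smul]
    exact intervalIntegral.integral_ofReal
  rw [hi] at h
  simp only [hf] at h
  have h2 := (Complex.continuous_re.tendsto _).comp h
  simp only [Complex.ofReal_re] at h2
  refine h2.congr fun N => ?_
  simp only [Function.comp]
  have : (1 / (N : ℂ)) * ∑ k ∈ Finset.range N, (H ((k : ℝ) * φ) : ℂ) =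
    (((1 / (N : ℝ)) * ∑ k ∈ Finset.range N, H ((k : ℝ) * φ) : ℝ) : ℂ) := by push_cast; rfl
  rw [this, Complex.ofReal_re]
lemma weyl_sandwich (φ : ℝ) (hφ : Irrational φ) (H : ℝ → ℝ)
    (hH : IntervalIntegrable H MeasureTheory.volume 0 1)
    (happ : ∀ ε > 0, ∃ C T : ℝ → ℝ, Continuous C ∧ Function.Periodic C 1 ∧ Continuous T ∧
      Function.Periodic T 1 ∧ (∀ x, |H x - C x| ≤ T x) ∧ ∫ x in (0 : ℝ)..1, T x ≤ ε) :
    Tendsto (fun N : ℕ => (1 / (N : ℝ)) * ∑ k ∈ Finset.range N, H ((k : ℝ) * φ)) atTop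
      (nhds (∫ x in (0 : ℝ)..1, H x)) := by
  rw [Metric.tendsto_atTop]
  intro ε hε
  obtain ⟨C, T, hC, hCp, hT, hTp, hle, hint⟩ := happ (ε / 4) (by positivity)
  obtain ⟨N₁, hN₁⟩ := Metric.tendsto_atTop.1 (weyl_real φ hφ C hC hCp) (ε / 4) (by positivity)
  obtain ⟨N₂, hN₂⟩ := Metric.tendsto_atTop.1 (weyl_real φ hφ T hT hTp) (ε / 4) (by positivity)
  refine ⟨max N₁ N₂, fun N hN => ?_⟩
  have h1 := hN₁ N (le_of_max_le_left hN)
  have h2 := hN₂ N (le_of_max_le_right hN)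
  have h3 : |(1 / (N : ℝ)) * ∑ k ∈ Finset.range N, H ((k : ℝ) * φ) -
      (1 / (N : ℝ)) * ∑ k ∈ Finset.range N, C ((k : ℝ) * φ)| ≤
      (1 / (N : ℝ)) * ∑ k ∈ Finset.range N, T ((k : ℝ) * φ) := by
    rw [← mul_sub, ← sum_sub_distrib, abs_mul, abs_of_nonneg (by positivity : (0:ℝ) ≤ 1 / N)]
    gcongr
    refine (abs_sum_le_sum_abs _ _).trans (sum_le_sum fun k _ => hle _)
  have h4 : |(∫ x in (0 : ℝ)..1, H x) - ∫ x in (0 : ℝ)..1, C x| ≤ ∫ x in (0 : ℝ)..1, T x := by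
    have hCi := hC.intervalIntegrable (μ := MeasureTheory.volume) 0 1
    rw [← intervalIntegral.integral_sub hH hCi]
    refine (intervalIntegral.abs_integral_le_integral_abs zero_le_one).trans ?_
    exact intervalIntegral.integral_mono_on zero_le_one (hH.sub hCi).abs
      (hT.intervalIntegrable 0 1) (fun x _ => hle x)
  rw [Real.dist_eq] at *
  rw [abs_lt] at *
  rw [abs_le] at h3 h4
  constructor <;> linarith

/-- Bounded measurable 1-periodic functions. -/
structure PerBdd (f : ℝ → ℝ) : Prop where
  meas : Measurable f
  bdd : ∃ C, ∀ x, |f x| ≤ C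
  per : Function.Periodic f 1

lemma PerBdd.ii {f : ℝ → ℝ} (hf : PerBdd f) (a b : ℝ) :
    IntervalIntegrable f MeasureTheory.volume a b := by
  obtain ⟨C, hC⟩ := hf.bdd
  refine (intervalIntegrable_const (c := C)).mono_fun hf.meas.aestronglyMeasurable ?_
  refine Eventually.of_forall fun x => ?_
  simpa using (hC x).trans (le_abs_self C)

lemma PerBdd.add {f g : ℝ → ℝ} (hf : PerBdd f) (hg : PerBdd g) :
    PerBdd (fun x => f x + g x) := by
  obtain ⟨C, hC⟩ := hf.bdd
  obtain ⟨D, hD⟩ := hg.bdd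
  refine ⟨hf.meas.add hg.meas, ⟨C + D, fun x => (abs_add_le _ _).trans (add_le_add (hC x) (hD x))⟩,
    fun x => by simp only [hf.per x, hg.per x]⟩

lemma PerBdd.mul {f g : ℝ → ℝ} (hf : PerBdd f) (hg : PerBdd g) :
    PerBdd (fun x => f x * g x) := by
  obtain ⟨C, hC⟩ := hf.bdd
  obtain ⟨D, hD⟩ := hg.bdd
  refine ⟨hf.meas.mul hg.meas, ⟨C * D, fun x => ?_⟩,
    fun x => by simp only [hf.per x, hg.per x]⟩
  rw [abs_mul]
  exact mul_le_mul (hC x) (hD x) (abs_nonneg _) ((abs_nonneg _).trans (hC x))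

lemma PerBdd.const (c : ℝ) : PerBdd (fun _ => c) :=
  ⟨measurable_const, ⟨|c|, fun _ => le_rfl⟩, fun _ => rfl⟩

lemma PerBdd.sub {f g : ℝ → ℝ} (hf : PerBdd f) (hg : PerBdd g) :
    PerBdd (fun x => f x - g x) := by
  have := hf.add ((PerBdd.const (-1)).mul hg)
  convert this using 2
  ring

lemma PerBdd.sum {ι : Type*} (S : Finset ι) {f : ι → ℝ → ℝ} (hf : ∀ i, PerBdd (f i)) :
    PerBdd (fun x => ∑ i ∈ S, f i x) := by
  classical
  induction S using Finset.induction_on with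
  | empty => simpa using PerBdd.const 0
  | insert a S ha ih =>
    simp only [sum_insert ha]
    exact (hf a).add ih

lemma per_comp {f : ℝ → ℝ} (hf : Function.Periodic f 1) (y : ℝ) (m : ℤ) :
    Function.Periodic (fun x => f (y + m * x)) 1 := by
  intro x
  have := (hf.int_mul m) (y + m * x)
  simp only
  rw [← this]
  congr 1
  ring

lemma PerBdd.comp {f : ℝ → ℝ} (hf : PerBdd f) (y : ℝ) (m : ℤ) :
    PerBdd (fun x => f (y + m * x)) := by
  obtain ⟨C, hC⟩ := hf.bdd
  exact ⟨hf.meas.comp (by fun_prop), ⟨C, fun x => hC _⟩, per_comp hf.per y m⟩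

lemma PerBdd.fract : PerBdd (Int.fract : ℝ → ℝ) :=
  ⟨measurable_fract, ⟨1, fun x => by
    rw [abs_of_nonneg (Int.fract_nonneg x)]; exact (Int.fract_lt_one x).le⟩,
    fun x => Int.fract_add_one x⟩

lemma PerBdd.of_fract (F : ℝ → ℝ) (hF : Continuous F) : PerBdd (fun x => F (Int.fract x)) := by
  obtain ⟨C, hC⟩ := isCompact_Icc.exists_bound_of_continuousOn (hF.continuousOn (s := Set.Icc 0 1))
  exact ⟨hF.measurable.comp measurable_fract,
    ⟨C, fun x => hC _ ⟨Int.fract_nonneg x, (Int.fract_lt_one x).le⟩⟩,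
    fun x => by simp⟩

lemma PerBdd.integral_comp {f : ℝ → ℝ} (hf : PerBdd f) (y : ℝ) {m : ℤ} (hm : m ≠ 0) :
    ∫ x in (0 : ℝ)..1, f (y + m * x) = ∫ x in (0 : ℝ)..1, f x := by
  have hm' : (m : ℝ) ≠ 0 := by exact_mod_cast hm
  rw [intervalIntegral.integral_comp_add_mul _ hm']
  have h := hf.per.intervalIntegral_add_zsmul_eq m y hf.ii
  have h2 := hf.per.intervalIntegral_add_eq y 0
  simp only [zsmul_eq_mul, mul_one, zero_add] at h h2
  rw [mul_zero, add_zero, mul_one, h, h2, smul_eq_mul]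
  field_simp

lemma integral_fract (F : ℝ → ℝ) :
    ∫ x in (0 : ℝ)..1, F (Int.fract x) = ∫ x in (0 : ℝ)..1, F x := by
  apply intervalIntegral.integral_congr_ae
  have : ∀ᵐ x : ℝ, x ≠ 1 := by
    simp [MeasureTheory.ae_iff]
  filter_upwards [this] with x hx hx2
  rw [Set.uIoc_of_le zero_le_one] at hx2
  rw [Int.fract_eq_self.2 ⟨hx2.1.le, lt_of_le_of_ne hx2.2 hx⟩]

lemma fract_approx (ε : ℝ) (hε : 0 < ε) : ∃ c t : ℝ → ℝ, Continuous c ∧ Function.Periodic c 1 ∧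
    Continuous t ∧ Function.Periodic t 1 ∧ (∀ x, |c x| ≤ 2) ∧ (∀ x, |Int.fract x - c x| ≤ t x) ∧
    ∫ x in (0 : ℝ)..1, t x ≤ ε := by
  obtain ⟨K, hK⟩ := exists_nat_one_div_lt hε
  have hkey : ∀ x : ℝ, |1 - 2 * Int.fract x| ≤ 1 := fun x => by
    have h0 := Int.fract_nonneg x
    have h1 := Int.fract_lt_one x
    rw [abs_le]; constructor <;> linarith
  refine ⟨fun x => (fun v => v + (1 - 2 * v) ^ (2 * K + 1) / 2) (Int.fract x),
    fun x => (fun v => (1 - 2 * v) ^ (2 * K)) (Int.fract x), ?_, ?_, ?_, ?_, ?_, ?_, ?_⟩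
  · refine _root_.ContinuousOn.comp_fract''
      (f := fun v : ℝ => v + (1 - 2 * v) ^ (2 * K + 1) / 2) (by fun_prop) ?_
    have : ((1 : ℝ) - 2 * 1) ^ (2 * K + 1) = -1 := by
      rw [pow_succ, pow_mul]; norm_num
    rw [this]; norm_num
  · intro x; simp
  · refine _root_.ContinuousOn.comp_fract''
      (f := fun v : ℝ => (1 - 2 * v) ^ (2 * K)) (by fun_prop) ?_
    rw [pow_mul, pow_mul]; norm_num
  · intro x; simp
  · intro x
    have h0 := Int.fract_nonneg x
    have h1 := Int.fract_lt_one x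
    have h2 : |(1 - 2 * Int.fract x) ^ (2 * K + 1)| ≤ 1 := by
      rw [abs_pow]; exact pow_le_one₀ (abs_nonneg _) (hkey x)
    rw [abs_le] at h2 ⊢
    constructor <;> simp only <;> linarith
  · intro x
    have h2 : |(1 - 2 * Int.fract x) ^ (2 * K + 1)| ≤ (1 - 2 * Int.fract x) ^ (2 * K) := by
      rw [abs_pow, pow_succ, pow_mul, sq_abs, ← pow_mul]
      have : 0 ≤ (1 - 2 * Int.fract x) ^ (2 * K) := by rw [pow_mul]; positivity
      exact mul_le_of_le_one_right this (hkey x)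
    have h3 := abs_nonneg ((1 - 2 * Int.fract x) ^ (2 * K + 1))
    have : Int.fract x - (Int.fract x + (1 - 2 * Int.fract x) ^ (2 * K + 1) / 2) =
      - ((1 - 2 * Int.fract x) ^ (2 * K + 1) / 2) := by ring
    simp only
    rw [this, abs_neg, abs_div, abs_two]
    linarith
  · rw [integral_fract]
    rw [intervalIntegral.integral_comp_sub_mul (fun x => x ^ (2 * K)) two_ne_zero]
    rw [integral_pow]
    have : ((1 : ℝ) - 2 * 1) ^ (2 * K + 1) = -1 := by
      rw [pow_succ, pow_mul]; norm_num
    rw [this]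
    refine le_trans ?_ hK.le
    simp only [mul_zero, sub_zero, one_pow, smul_eq_mul]
    have h5 : (0:ℝ) < (K : ℝ) + 1 := by positivity
    have h6 : (0:ℝ) < 2 * (K : ℝ) + 1 := by positivity
    push_cast
    have : (2:ℝ)⁻¹ * ((1 - -1) / (2 * (K:ℝ) + 1)) = 1 / (2 * (K : ℝ) + 1) := by
      field_simp; norm_num
    rw [this]
    apply one_div_le_one_div_of_le h5
    have : (0:ℝ) ≤ K := by positivity
    linarith

lemma weyl_blocks (φ : ℝ) (hφ : Irrational φ) (Q : ℕ) (y z : ℕ → ℝ) {r s : ℤ} (hr : r ≠ 0)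
    (hs : s ≠ 0) :
    Tendsto (fun N : ℕ => (1 / (N : ℝ)) * ∑ k ∈ Finset.range N, ∑ a ∈ Finset.range Q,
      (Int.fract (y a + r * ((k : ℝ) * φ)) - Int.fract (z a + s * ((k : ℝ) * φ))) ^ 2) atTop
      (nhds (∑ a ∈ Finset.range Q,
        ∫ x in (0 : ℝ)..1, (Int.fract (y a + r * x) - Int.fract (z a + s * x)) ^ 2)) := by
  have hP : ∀ a, PerBdd (fun x => (Int.fract (y a + r * x) - Int.fract (z a + s * x)) ^ 2) := by
    intro a
    simp only [pow_two]
    have := (PerBdd.fract.comp (y a) r).sub (PerBdd.fract.comp (z a) s)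
    exact this.mul this
  rw [← intervalIntegral.integral_finsetSum (fun a _ => (hP a).ii 0 1)]
  refine weyl_sandwich φ hφ (fun x => ∑ a ∈ Finset.range Q,
    (Int.fract (y a + r * x) - Int.fract (z a + s * x)) ^ 2)
    ((PerBdd.sum _ hP).ii 0 1) ?_
  intro ε hε
  have hQ : (0 : ℝ) < 10 * (Q + 1) := by positivity
  obtain ⟨c, t, hc, hcp, ht, htp, hcb, hct, hti⟩ := fract_approx (ε / (10 * (Q + 1)))
    (by positivity)
  have htP : PerBdd t := by
    obtain ⟨C, hC⟩ := isCompact_Icc.exists_bound_of_continuousOn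
      (ht.continuousOn (s := Set.Icc 0 1))
    refine ⟨ht.measurable, ⟨C, fun x => ?_⟩, htp⟩
    have h1 := htp.int_mul ⌊x⌋ (Int.fract x)
    rw [mul_one, Int.fract_add_floor] at h1
    rw [h1]
    exact hC _ ⟨Int.fract_nonneg x, (Int.fract_lt_one x).le⟩
  refine ⟨fun x => ∑ a ∈ Finset.range Q, (c (y a + r * x) - c (z a + s * x)) ^ 2,
    fun x => ∑ a ∈ Finset.range Q, 5 * (t (y a + r * x) + t (z a + s * x)),
    by fun_prop, ?_, by fun_prop, ?_, ?_, ?_⟩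
  · intro x
    refine sum_congr rfl fun a _ => ?_
    have h1 := per_comp hcp (y a) r x
    have h2 := per_comp hcp (z a) s x
    simp only at h1 h2
    rw [h1, h2]
  · intro x
    refine sum_congr rfl fun a _ => ?_
    have h1 := per_comp htp (y a) r x
    have h2 := per_comp htp (z a) s x
    simp only at h1 h2
    rw [h1, h2]
  · intro x
    simp only
    rw [← sum_sub_distrib]
    refine (abs_sum_le_sum_abs _ _).trans (sum_le_sum fun a _ => ?_)
    set X := y a + r * x
    set Y := z a + s * x
    have e : (Int.fract X - Int.fract Y) ^ 2 - (c X - c Y) ^ 2 =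
      ((Int.fract X - Int.fract Y) + (c X - c Y)) *
        ((Int.fract X - c X) - (Int.fract Y - c Y)) := by ring
    rw [e, abs_mul]
    have h1 : |(Int.fract X - Int.fract Y) + (c X - c Y)| ≤ 5 := by
      have a1 := Int.fract_nonneg X
      have a2 := Int.fract_nonneg Y
      have a3 := Int.fract_lt_one X
      have a4 := Int.fract_lt_one Y
      have a5 := abs_le.1 (hcb X)
      have a6 := abs_le.1 (hcb Y)
      rw [abs_le]; constructor <;> linarith
    have h2 : |(Int.fract X - c X) - (Int.fract Y - c Y)| ≤ t X + t Y :=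
      (abs_sub _ _).trans (add_le_add (hct X) (hct Y))
    exact mul_le_mul h1 h2 (abs_nonneg _) (by norm_num)
  · have hT : ∀ a, PerBdd (fun x => 5 * (t (y a + r * x) + t (z a + s * x))) := fun a =>
      (PerBdd.const 5).mul ((htP.comp _ _).add (htP.comp _ _))
    rw [intervalIntegral.integral_finsetSum (fun a _ => (hT a).ii 0 1)]
    have : ∀ a ∈ Finset.range Q, ∫ x in (0 : ℝ)..1, 5 * (t (y a + r * x) + t (z a + s * x)) ≤
        10 * (ε / (10 * (Q + 1))) := by
      intro a _
      rw [intervalIntegral.integral_const_mul,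
        intervalIntegral.integral_add ((htP.comp _ _).ii 0 1) ((htP.comp _ _).ii 0 1),
        htP.integral_comp _ hr, htP.integral_comp _ hs]
      linarith
    refine (sum_le_sum this).trans ?_
    rw [sum_const, card_range, nsmul_eq_mul]
    have : (Q : ℝ) * (10 * (ε / (10 * (Q + 1)))) = ε * (Q / (Q + 1)) := by field_simp
    rw [this]
    apply mul_le_of_le_one_right hε.le
    rw [div_le_one (by positivity)]
    linarith

lemma cesaro_block (u : ℕ → ℝ) (C : ℝ) (hu : ∀ j, |u j| ≤ C) (Q : ℕ) (hQ : 0 < Q) (L : ℝ)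
    (h : Tendsto (fun N : ℕ => (1 / (N : ℝ)) * ∑ k ∈ Finset.range N, ∑ a ∈ Finset.range Q,
      u (Q * k + a)) atTop (nhds L)) :
    Tendsto (fun n : ℕ => (1 / (n : ℝ)) * ∑ j ∈ Finset.range n, u j) atTop (nhds (L / Q)) := by
  have hQ' : (0 : ℝ) < Q := by exact_mod_cast hQ
  have hC : 0 ≤ C := (abs_nonneg _).trans (hu 0)
  have hblock : ∀ N : ℕ, ∑ k ∈ Finset.range N, ∑ a ∈ Finset.range Q, u (Q * k + a) =
      ∑ j ∈ Finset.range (Q * N), u j := by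
    intro N
    induction N with
    | zero => simp
    | succ N ih => rw [sum_range_succ, ih, Nat.mul_succ, sum_range_add]
  simp_rw [hblock] at h
  have hdiv : Tendsto (fun n : ℕ => n / Q) atTop atTop := Nat.tendsto_div_const_atTop hQ.ne'
  have h1 := h.comp hdiv
  have hr : Tendsto (fun n : ℕ => ((n / Q : ℕ) : ℝ) / n) atTop (nhds (1 / Q)) := by
    rw [tendsto_iff_dist_tendsto_zero]
    refine squeeze_zero' (Eventually.of_forall fun _ => dist_nonneg) ?_
      (tendsto_const_div_atTop_nhds_zero_nat 1)
    filter_upwards [eventually_gt_atTop 0] with n hn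
    have hn' : (0 : ℝ) < n := by exact_mod_cast hn
    have e : (n : ℝ) = Q * ((n / Q : ℕ) : ℝ) + ((n % Q : ℕ) : ℝ) := by
      exact_mod_cast (Nat.div_add_mod n Q).symm
    have hm : ((n % Q : ℕ) : ℝ) < Q := by exact_mod_cast Nat.mod_lt n hQ
    have hm0 : (0 : ℝ) ≤ ((n % Q : ℕ) : ℝ) := by positivity
    have e2 : ((n / Q : ℕ) : ℝ) / n - 1 / Q = - (((n % Q : ℕ) : ℝ) / Q) / n := by
      field_simp
      linarith
    rw [Real.dist_eq, e2, neg_div, abs_neg, abs_of_nonneg (by positivity)]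
    gcongr
    rw [div_le_one hQ']
    exact hm.le
  have h2 := h1.mul hr
  have h3 : Tendsto (fun n : ℕ => (1 / (n : ℝ)) * (∑ j ∈ Finset.range n, u j -
      ∑ j ∈ Finset.range (Q * (n / Q)), u j)) atTop (nhds 0) := by
    have hb : ∀ n : ℕ, ‖(1 / (n : ℝ)) * (∑ j ∈ Finset.range n, u j -
      ∑ j ∈ Finset.range (Q * (n / Q)), u j)‖ ≤ (Q * C) / n := by
      intro n
      have e : ∑ j ∈ Finset.range n, u j = ∑ j ∈ Finset.range (Q * (n / Q)), u j +
          ∑ j ∈ Finset.range (n % Q), u (Q * (n / Q) + j) := by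
        rw [← sum_range_add, Nat.div_add_mod]
      rw [e, add_sub_cancel_left, Real.norm_eq_abs, abs_mul, abs_of_nonneg (by positivity),
        div_mul_eq_mul_div, one_mul]
      gcongr
      refine (abs_sum_le_sum_abs _ _).trans ((sum_le_sum fun j _ => hu _).trans ?_)
      rw [sum_const, card_range, nsmul_eq_mul]
      gcongr
      exact (Nat.mod_lt n hQ).le
    exact squeeze_zero_norm hb (tendsto_const_div_atTop_nhds_zero_nat _)
  have h4 := h3.add h2
  rw [zero_add, mul_one_div] at h4
  refine h4.congr fun n => ?_
  simp only [Function.comp]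
  rcases Nat.eq_zero_or_pos (n / Q) with h0 | h0
  · simp [h0]
  · have : ((n / Q : ℕ) : ℝ) ≠ 0 := by exact_mod_cast h0.ne'
    generalize ((n / Q : ℕ) : ℝ) = w at *
    have e : 1 / w * (∑ j ∈ Finset.range (Q * (n / Q)), u j) * (w / n) =
      (1 / (n : ℝ)) * ∑ j ∈ Finset.range (Q * (n / Q)), u j := by field_simp
    rw [e]; ring

/-- The first periodic Bernoulli function. -/
noncomputable def bern (x : ℝ) : ℝ := Int.fract x - 1 / 2

lemma bern_perBdd : PerBdd bern := PerBdd.fract.sub (PerBdd.const _)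

lemma bern_add_int (x : ℝ) (n : ℤ) : bern (x + n) = bern x := by simp [bern]

lemma sum_residues (Q : ℕ) (hQ : 0 < Q) (p : ℤ) (hp : Int.gcd p Q = 1) (m : ℤ) :
    ∑ a ∈ Finset.range Q, (((m + a * p) % (Q : ℤ) : ℤ) : ℝ) = (Q : ℝ) * (Q - 1) / 2 := by
  have hQ' : (Q : ℤ) ≠ 0 := by exact_mod_cast hQ.ne'
  have hQ0 : (0 : ℤ) < Q := by exact_mod_cast hQ
  have hnn : ∀ a : ℕ, 0 ≤ (m + a * p) % (Q : ℤ) := fun a => Int.emod_nonneg _ hQ'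
  have hlt : ∀ a : ℕ, (m + a * p) % (Q : ℤ) < Q := fun a => Int.emod_lt_of_pos _ hQ0
  have hmaps : ∀ a ∈ Finset.range Q, ((m + a * p) % (Q : ℤ)).toNat ∈ Finset.range Q := by
    intro a _
    have := hnn a
    have := hlt a
    simp only [mem_range]
    omega
  have hinj : Set.InjOn (fun a : ℕ => ((m + a * p) % (Q : ℤ)).toNat) (Finset.range Q) := by
    intro a ha b hb hab
    simp only [coe_range, Set.mem_Iio] at ha hb
    have h1 : (m + a * p) % (Q : ℤ) = (m + b * p) % (Q : ℤ) := by
      have := hnn a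
      have := hnn b
      simp only at hab
      omega
    have h2 : (Q : ℤ) ∣ (b - a : ℤ) * p := by
      have := Int.ModEq.dvd (n := (Q : ℤ)) h1
      convert this using 1
      ring
    have h3 : (Q : ℤ) ∣ (b - a : ℤ) := by
      refine IsCoprime.dvd_of_dvd_mul_right ?_ h2
      exact (Int.isCoprime_iff_gcd_eq_one.2 hp).symm
    have h4 : (b - a : ℤ) = 0 := by
      apply Int.eq_zero_of_abs_lt_dvd h3
      rw [abs_lt]; constructor <;> omega
    omega
  have himg : (Finset.range Q).image (fun a : ℕ => ((m + a * p) % (Q : ℤ)).toNat) =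
      Finset.range Q := by
    apply Finset.eq_of_subset_of_card_le
    · intro x hx
      obtain ⟨a, ha, rfl⟩ := Finset.mem_image.1 hx
      exact hmaps a ha
    · rw [Finset.card_image_of_injOn hinj]
  have hg : ∀ n : ℕ, ∑ i ∈ Finset.range n, (i : ℝ) = (n : ℝ) * (n - 1) / 2 := by
    intro n
    induction n with
    | zero => simp
    | succ n ih => rw [sum_range_succ, ih]; push_cast; ring
  rw [← hg Q]
  conv_rhs => rw [← himg]
  rw [Finset.sum_image hinj]
  refine sum_congr rfl fun a _ => ?_
  have := Int.toNat_of_nonneg (hnn a)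
  exact_mod_cast this.symm

lemma bern_sum (Q : ℕ) (hQ : 0 < Q) (p : ℤ) (hp : Int.gcd p Q = 1) (y : ℝ) :
    ∑ a ∈ Finset.range Q, bern (y + a * (p / Q)) = bern (Q * y) := by
  have hQ0 : (0 : ℝ) < Q := by exact_mod_cast hQ
  have hQi : (0 : ℤ) < Q := by exact_mod_cast hQ
  set m := ⌊(Q : ℝ) * y⌋ with hm
  set f := Int.fract ((Q : ℝ) * y) with hf
  have hmf : (Q : ℝ) * y = m + f := (Int.floor_add_fract _).symm
  have hf0 : 0 ≤ f := Int.fract_nonneg _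
  have hf1 : f < 1 := Int.fract_lt_one _
  have key : ∀ a : ℕ, Int.fract (y + a * (p / Q)) =
      ((((m + a * p) % (Q : ℤ) : ℤ) : ℝ) + f) / Q := by
    intro a
    rw [Int.fract_eq_iff]
    have h1 : 0 ≤ (m + a * p) % (Q : ℤ) := Int.emod_nonneg _ hQi.ne'
    have h2 : (m + a * p) % (Q : ℤ) + 1 ≤ Q := Int.emod_lt_of_pos _ hQi
    have h1' : (0 : ℝ) ≤ (((m + a * p) % (Q : ℤ) : ℤ) : ℝ) := by exact_mod_cast h1
    have h2' : (((m + a * p) % (Q : ℤ) : ℤ) : ℝ) + 1 ≤ Q := by exact_mod_cast h2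
    refine ⟨by positivity, ?_, (m + a * p) / (Q : ℤ), ?_⟩
    · rw [div_lt_one hQ0]; linarith
    · have h3 : (Q : ℝ) * (((m + a * p) / (Q : ℤ) : ℤ) : ℝ) +
          (((m + a * p) % (Q : ℤ) : ℤ) : ℝ) = m + a * p := by
        exact_mod_cast Int.mul_ediv_add_emod (m + a * p) Q
      field_simp
      linarith
  simp only [bern, key]
  rw [sum_sub_distrib, ← sum_div, sum_add_distrib, sum_residues Q hQ p hp m]
  simp only [sum_const, card_range, nsmul_eq_mul]
  rw [← hf]
  field_simp
  ring

lemma bern_sq_integral : ∫ x in (0 : ℝ)..1, bern x * bern x = 1 / 12 := by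
  have := integral_fract (fun v => (v - 1 / 2) * (v - 1 / 2))
  simp only [bern]
  rw [this]
  have e : ∀ x : ℝ, (x - 1 / 2) * (x - 1 / 2) = (x - 1 / 2) ^ 2 := fun x => by ring
  simp_rw [e]
  rw [intervalIntegral.integral_comp_sub_right (fun x => x ^ 2), integral_pow]
  norm_num

lemma bern_neg_integral : ∫ x in (0 : ℝ)..1, bern (-x) * bern x = -(1 / 12) := by
  rw [← bern_sq_integral, ← intervalIntegral.integral_neg]
  apply intervalIntegral.integral_congr_ae
  have : ∀ᵐ x : ℝ, x ≠ 1 := by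
    simp [MeasureTheory.ae_iff]
  filter_upwards [this] with x hx hx2
  rw [Set.uIoc_of_le zero_le_one] at hx2
  have h1 : Int.fract x = x := Int.fract_eq_self.2 ⟨hx2.1.le, lt_of_le_of_ne hx2.2 hx⟩
  have h2 : Int.fract (-x) = 1 - x := by
    rw [Int.fract_neg (by rw [h1]; exact hx2.1.ne'), h1]
  simp only [bern, h1, h2]
  ring

lemma bern_comp (m : ℤ) : PerBdd (fun x => bern (m * x)) := by
  simpa using bern_perBdd.comp 0 m

lemma dilate {f : ℝ → ℝ} (hf : PerBdd f) {m : ℤ} (hm : m ≠ 0) :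
    ∫ x in (0 : ℝ)..1, f (m * x) = ∫ x in (0 : ℝ)..1, f x := by
  simpa using hf.integral_comp 0 hm

lemma shift {f : ℝ → ℝ} (hf : PerBdd f) (y : ℝ) :
    ∫ x in (0 : ℝ)..1, f (y + x) = ∫ x in (0 : ℝ)..1, f x := by
  simpa using hf.integral_comp y one_ne_zero

lemma bern_reduce (m : ℤ) (n : ℕ) (hn : 0 < n) (hmn : Int.gcd m n = 1) :
    (n : ℝ) * ∫ x in (0 : ℝ)..1, bern (m * x) * bern (n * x) =
      ∫ x in (0 : ℝ)..1, bern (m * x) * bern x := by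
  have hn0 : (n : ℝ) ≠ 0 := by exact_mod_cast hn.ne'
  have hP : PerBdd (fun x => bern (m * x) * bern (n * x)) := by
    simpa using (bern_comp m).mul (bern_comp n)
  have h1 : ∀ k : ℕ, ∫ x in (0 : ℝ)..1, bern (m * x) * bern (n * x) =
      ∫ x in (0 : ℝ)..1, bern (m * x + k * (m / n)) * bern (n * x) := by
    intro k
    rw [← shift hP ((k : ℝ) / n)]
    congr 1
    ext x
    have e1 : (m : ℝ) * (k / n + x) = m * x + k * (m / n) := by field_simp; ring
    have e2 : (n : ℝ) * (k / n + x) = n * x + ((k : ℤ) : ℝ) := by push_cast; field_simp; ring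
    rw [e1, e2, bern_add_int]
  have h2 : (n : ℝ) * ∫ x in (0 : ℝ)..1, bern (m * x) * bern (n * x) =
      ∑ k ∈ Finset.range n, ∫ x in (0 : ℝ)..1, bern (m * x + k * (m / n)) * bern (n * x) := by
    rw [← sum_congr rfl (fun k _ => h1 k)]
    simp
  have hP2 : ∀ k : ℕ, PerBdd (fun x => bern (m * x + k * (m / n)) * bern (n * x)) := by
    intro k
    have := (bern_perBdd.comp (k * (m / n)) m).mul (bern_comp n)
    simpa [add_comm] using this
  rw [h2, ← intervalIntegral.integral_finsetSum (fun k _ => (hP2 k).ii 0 1)]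
  simp_rw [← sum_mul, bern_sum n hn m hmn]
  have := dilate ((bern_comp m).mul bern_perBdd) (m := (n : ℤ)) (by exact_mod_cast hn.ne')
  rw [← this]
  congr 1
  ext x
  push_cast
  congr 2
  ring

lemma bern_single (m : ℤ) (hm : m ≠ 0) :
    ∫ x in (0 : ℝ)..1, bern (m * x) * bern x = 1 / (12 * m) := by
  have hM : 0 < m.natAbs := Int.natAbs_pos.2 hm
  have hM' : ((m.natAbs : ℕ) : ℝ) ≠ 0 := by exact_mod_cast hM.ne'
  rcases Int.natAbs_eq m with h | h
  · have h1 := bern_reduce 1 m.natAbs hM (by simp)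
    simp only [Int.cast_one, one_mul] at h1
    rw [bern_sq_integral] at h1
    have e : (m : ℝ) = (m.natAbs : ℝ) := by
      have := congrArg (Int.cast : ℤ → ℝ) h
      rwa [Int.cast_natCast] at this
    rw [e]
    simp_rw [mul_comm (bern (_ * _))]
    rw [eq_div_iff (by simpa using hm)]
    linear_combination 12 * h1
  · have h1 := bern_reduce (-1) m.natAbs hM (by simp)
    simp only [Int.cast_neg, Int.cast_one, neg_mul, one_mul] at h1
    rw [bern_neg_integral] at h1
    have e : (m : ℝ) = -(m.natAbs : ℝ) := by
      have := congrArg (Int.cast : ℤ → ℝ) h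
      rwa [Int.cast_neg, Int.cast_natCast] at this
    have h2 := dilate ((bern_comp m).mul bern_perBdd) (m := -1) (by norm_num)
    rw [← h2, e]
    simp only [Int.cast_neg, Int.cast_one, neg_mul, one_mul, mul_neg, neg_neg]
    simp_rw [mul_comm (bern (_ * _))]
    rw [eq_div_iff (by simpa using hm)]
    linear_combination (-12) * h1

lemma bern_integral (m : ℤ) (hm : m ≠ 0) (n : ℕ) (hn : 0 < n) :
    ∫ x in (0 : ℝ)..1, bern (m * x) * bern (n * x) =
      (Int.gcd m n : ℝ) ^ 2 / (12 * m * n) := by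
  have hn' : (n : ℤ) ≠ 0 := by exact_mod_cast hn.ne'
  have hg : 0 < Int.gcd m n := Int.gcd_pos_of_ne_zero_left _ hm
  obtain ⟨m', n', hco, h1, h2⟩ := Int.exists_gcd_one hg
  set g := Int.gcd m n with hgdef
  have hgZ : (0 : ℤ) < g := by exact_mod_cast hg
  have hgR : (0 : ℝ) < g := by exact_mod_cast hg
  have hn'0 : 0 < n' := by
    have : (0 : ℤ) < n' * g := by rw [← h2]; exact_mod_cast hn
    exact pos_of_mul_pos_left this hgZ.le
  have hm'0 : m' ≠ 0 := by rintro rfl; simp at h1; exact hm h1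
  lift n' to ℕ using hn'0.le
  have hn'1 : 0 < n' := by exact_mod_cast hn'0
  have h1R : (m : ℝ) = m' * g := by exact_mod_cast h1
  have h2R : (n : ℝ) = n' * g := by exact_mod_cast h2
  have hP : PerBdd (fun x => bern (m' * x) * bern (n' * x)) := by
    simpa using (bern_comp m').mul (bern_comp n')
  have h3 := dilate hP (m := (g : ℤ)) hgZ.ne'
  have h4 := bern_reduce m' n' hn'1 hco
  rw [bern_single m' hm'0] at h4
  have h5 : ∫ x in (0 : ℝ)..1, bern (m * x) * bern (n * x) =
      ∫ x in (0 : ℝ)..1, bern (m' * x) * bern (n' * x) := by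
    rw [← h3, h1R, h2R]
    congr 1
    ext x
    push_cast
    rw [mul_assoc, mul_assoc]
  have hm'R : (m' : ℝ) ≠ 0 := by exact_mod_cast hm'0
  have hn'R : (n' : ℝ) ≠ 0 := by exact_mod_cast hn'1.ne'
  rw [h5, h1R, h2R]
  generalize (∫ x in (0 : ℝ)..1, bern (m' * x) * bern (n' * x)) = J at h4
  field_simp
  field_simp at h4
  linarith

/-- Let `α` be irrational, `p, q` coprime with `q > 0`, `r ≠ 0` and `s > 0` coprime,
and `β = p/q + (r/s)α`. Then
`lim_{n→∞} (1/n) ∑_{j=1}^n ({jβ} − {jα})² = 1/6 − gcd(s,q)²/(6srq²)`. -/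
theorem stmt_15 (α : ℝ) (hα : Irrational α) (p q r s : ℤ)
    (hq : 0 < q) (hpq : Int.gcd p q = 1) (hr : r ≠ 0) (hs : 0 < s) (hrs : Int.gcd r s = 1)
    (β : ℝ) (hβ : β = (p : ℝ) / (q : ℝ) + ((r : ℝ) / (s : ℝ)) * α) :
    Tendsto
      (fun n : ℕ =>
        (1 / (n : ℝ)) *
          ∑ j ∈ Finset.Icc 1 n,
            (Int.fract ((j : ℝ) * β) - Int.fract ((j : ℝ) * α)) ^ 2)
      atTop
      (nhds (1 / 6 - (Int.gcd s q : ℝ) ^ 2 / (6 * (s : ℝ) * (r : ℝ) * (q : ℝ) ^ 2))) := by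
  lift q to ℕ using hq.le with Q
  lift s to ℕ using hs.le with S
  have hQ : 0 < Q := by exact_mod_cast hq
  have hS : 0 < S := by exact_mod_cast hs
  have hQR : (0 : ℝ) < Q := by exact_mod_cast hQ
  have hSR : (0 : ℝ) < S := by exact_mod_cast hS
  have hrR : (r : ℝ) ≠ 0 := by exact_mod_cast hr
  simp only [Int.cast_natCast] at *
  set θ : ℝ := α / S with hθ
  have hθi : Irrational θ := hα.div_natCast hS.ne'
  have hφ : Irrational ((Q : ℝ) * θ) := hθi.natCast_mul hQ.ne'
  have hαθ : α = S * θ := by rw [hθ]; field_simp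
  have hβθ : β = p / Q + r * θ := by rw [hβ, hθ]; ring
  let g : ℕ → ℝ := fun j =>
    (Int.fract (((j + 1 : ℕ) : ℝ) * β) - Int.fract (((j + 1 : ℕ) : ℝ) * α)) ^ 2
  have hsum : ∀ n : ℕ, ∑ j ∈ Finset.Icc 1 n,
      (Int.fract ((j : ℝ) * β) - Int.fract ((j : ℝ) * α)) ^ 2 = ∑ j ∈ Finset.range n, g j := by
    intro n
    induction n with
    | zero => simp
    | succ n ih => rw [sum_range_succ, ← ih, Finset.sum_Icc_succ_top (by omega)]
  simp_rw [hsum]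
  have hS' : (S : ℤ) ≠ 0 := by exact_mod_cast hS.ne'
  have hW := weyl_blocks (Q * θ) hφ Q (fun a => (a + 1) * (p / Q) + r * ((a + 1) * θ))
    (fun a => S * ((a + 1) * θ)) hr hS'
  have hfr : ∀ (x : ℝ) (n : ℤ), Int.fract (x + n) = Int.fract x := fun x n => by simp
  have hb : ∀ j, |g j| ≤ 1 := by
    intro j
    have a1 := Int.fract_nonneg (((j + 1 : ℕ) : ℝ) * β)
    have a2 := Int.fract_nonneg (((j + 1 : ℕ) : ℝ) * α)
    have a3 := Int.fract_lt_one (((j + 1 : ℕ) : ℝ) * β)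
    have a4 := Int.fract_lt_one (((j + 1 : ℕ) : ℝ) * α)
    simp only [g]
    rw [abs_of_nonneg (sq_nonneg _), sq_le_one_iff_abs_le_one, abs_le]
    constructor <;> linarith
  have hblk : ∀ k a : ℕ, g (Q * k + a) =
      (Int.fract (((a + 1) * (p / Q) + r * ((a + 1) * θ)) + r * ((k : ℝ) * (Q * θ))) -
        Int.fract (S * ((a + 1) * θ) + ((S : ℤ) : ℝ) * ((k : ℝ) * (Q * θ)))) ^ 2 := by
    intro k a
    have e1 : ((Q * k + a + 1 : ℕ) : ℝ) * β =
      (((a + 1) * (p / Q) + r * ((a + 1) * θ)) + r * ((k : ℝ) * (Q * θ))) +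
        ((k * p : ℤ) : ℝ) := by
      rw [hβθ]; push_cast; field_simp; ring
    have e2 : ((Q * k + a + 1 : ℕ) : ℝ) * α =
      S * ((a + 1) * θ) + ((S : ℤ) : ℝ) * ((k : ℝ) * (Q * θ)) := by
      rw [hαθ]; push_cast; ring
    simp only [g]
    rw [e1, e2, hfr]
  simp_rw [← hblk] at hW
  have hC := cesaro_block g 1 hb Q hQ _ hW
  convert hC using 2
  -- evaluation of the integrals
  have hI : ∀ a : ℕ, ∫ x in (0 : ℝ)..1,
      (Int.fract (((a : ℝ) + 1) * (p / Q) + r * ((a + 1) * θ) + r * x) -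
        Int.fract (S * (((a : ℝ) + 1) * θ) + ((S : ℤ) : ℝ) * x)) ^ 2 =
      1 / 6 - 2 * ∫ x in (0 : ℝ)..1, bern ((p / Q + r * x) + a * (p / Q)) * bern (S * x) := by
    intro a
    have hB1 := bern_perBdd.comp (((a : ℝ) + 1) * (p / Q)) r
    have hB2 := bern_comp (S : ℤ)
    have hP := (hB1.sub hB2).mul (hB1.sub hB2)
    have h1 := shift hP ((a + 1) * θ)
    have h2 : ∫ x in (0 : ℝ)..1,
      (Int.fract (((a : ℝ) + 1) * (p / Q) + r * ((a + 1) * θ) + r * x) -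
        Int.fract (S * (((a : ℝ) + 1) * θ) + ((S : ℤ) : ℝ) * x)) ^ 2 =
      ∫ x in (0 : ℝ)..1, (bern (((a : ℝ) + 1) * (p / Q) + r * x) - bern (((S : ℤ) : ℝ) * x)) *
        (bern (((a : ℝ) + 1) * (p / Q) + r * x) - bern (((S : ℤ) : ℝ) * x)) := by
      rw [← h1]
      congr 1
      ext x
      have e1 : ((a : ℝ) + 1) * (p / Q) + r * ((a + 1) * θ + x) =
        ((a : ℝ) + 1) * (p / Q) + r * ((a + 1) * θ) + r * x := by ring
      have e2 : ((S : ℤ) : ℝ) * (((a : ℝ) + 1) * θ + x) =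
        S * (((a : ℝ) + 1) * θ) + ((S : ℤ) : ℝ) * x := by push_cast; ring
      rw [e1, e2]
      simp only [bern]
      ring
    rw [h2]
    have e : ∀ u v : ℝ, (u - v) * (u - v) = (u * u + v * v) - 2 * (u * v) := fun u v => by ring
    simp_rw [e]
    have q1 := (bern_perBdd.mul bern_perBdd).integral_comp (((a : ℝ) + 1) * (p / Q)) hr
    have q2 := dilate (bern_perBdd.mul bern_perBdd) hS'
    rw [intervalIntegral.integral_sub
      (((hB1.mul hB1).add (hB2.mul hB2)).ii 0 1)
      (((PerBdd.const 2).mul (hB1.mul hB2)).ii 0 1),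
      intervalIntegral.integral_add ((hB1.mul hB1).ii 0 1) ((hB2.mul hB2).ii 0 1),
      intervalIntegral.integral_const_mul, q1, q2, bern_sq_integral]
    have e3 : ∀ x : ℝ, (p / Q + r * x) + a * (p / Q) = ((a : ℝ) + 1) * (p / Q) + r * x :=
      fun x => by ring
    simp_rw [e3, Int.cast_natCast]
    norm_num
  have hPs : ∀ a : ℕ, PerBdd (fun x =>
      bern ((p / Q + r * x) + a * (p / Q)) * bern (S * x)) := by
    intro a
    have := (bern_perBdd.comp (((a : ℝ) + 1) * (p / Q)) r).mul (bern_comp (S : ℤ))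
    have e3 : ∀ x : ℝ, (p / Q + r * x) + a * (p / Q) = ((a : ℝ) + 1) * (p / Q) + r * x :=
      fun x => by ring
    simp_rw [e3]
    simpa using this
  rw [sum_congr rfl (fun a _ => hI a), sum_sub_distrib, ← mul_sum,
    ← intervalIntegral.integral_finsetSum (fun a _ => (hPs a).ii 0 1)]
  simp_rw [← sum_mul, bern_sum Q hQ p hpq]
  have e4 : ∀ x : ℝ, bern (Q * (p / Q + r * x)) = bern (((Q * r : ℤ) : ℝ) * x) := by
    intro x
    rw [← bern_add_int (((Q * r : ℤ) : ℝ) * x) p]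
    congr 1
    push_cast
    field_simp
    ring
  simp_rw [e4]
  have hQr : (Q * r : ℤ) ≠ 0 := mul_ne_zero hq.ne' hr
  rw [bern_integral _ hQr S hS]
  have hgcd : Int.gcd (Q * r) S = Int.gcd S Q := by
    rw [Int.gcd_comm]
    exact Int.gcd_mul_left_right_of_gcd_eq_one (by rw [Int.gcd_comm]; exact hrs)
  rw [hgcd]
  simp only [sum_const, card_range, nsmul_eq_mul]
  push_cast
  field_simp
  ring
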